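/- Let R be a Noetherian local ring, M and N nonzero finitely generated R-modules with Tor_i^R(M, N) = 0 for all i ≥ 1, and suppose pd_R(M) < ∞. Then depth_R(M) + depth_R(N) = depth(R) + depth_R(M ⊗_R N) (the depth formula). -/

import Mathlib

open RingTheory.Sequence IsLocalRing CategoryTheory CategoryTheory.Limits
open scoped TensorProduct

/-- The `I`-depth of the module `M`: the supremum of the lengths of
(weakly) regular sequences on `M` consisting of elements of `I`.
(When `IM ≠ M` this is the common length of maximal `M`-regular sequences in `I`;
when `IM = M`, in particular when `M = 0`, it is `∞`, matching the usual convention.) -/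
noncomputable def rdepth {R : Type*} [CommRing R] (I : Ideal R)
    (M : Type*) [AddCommGroup M] [Module R M] : ℕ∞ :=
  sSup {n : ℕ∞ | ∃ rs : List R, (rs.length : ℕ∞) = n ∧ (∀ r ∈ rs, r ∈ I) ∧
    RingTheory.Sequence.IsWeaklyRegular M rs}

/-- `M` has finite projective dimension: it admits a projective resolution that
vanishes in all sufficiently large degrees. -/
def HasFiniteProjDim (R : Type u) [Ring R] (M : Type u) [AddCommGroup M] [Module R M] : Prop :=
  ∃ (n : ℕ) (P : ProjectiveResolution (ModuleCat.of R M)),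
    ∀ i : ℕ, n < i → IsZero (P.complex.X i)

/-!
Write `k` for the residue field. By Rees' theorem the depth of a module `L ≠ 0` is the least degree
in which `Ext k L` does not vanish. The formula follows from two instances of
`depth N = depth (M ⊗ N) + pd M`, for `N` itself and for `N = R`, where it is the
Auslander–Buchsbaum formula. That identity is proved by induction on `pd M`, along a minimal cover
`0 → K → F → M → 0` by a free module. Tor-independence passes from `M` to `K` and keeps the sequence
`0 → K ⊗ N → F ⊗ N → M ⊗ N → 0` exact, and `depth (F ⊗ N) = depth N` because `F` is free. In the
lowest degree in which `Ext k (K ⊗ N)` lives, its map to `Ext k (F ⊗ N)` is zero: if `K` is free,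
then `K ⊗ N → F ⊗ N` is by minimality a combination of maps with coefficients in the maximal ideal,
which annihilates `k`; otherwise `depth (F ⊗ N) > depth (K ⊗ N)` by induction. The long exact
sequence then gives `depth (K ⊗ N) = depth (M ⊗ N) + 1`.
-/

universe u v w

open CategoryTheory.Abelian

section Grade

variable {C : Type u} [Category.{v} C] [Abelian C] [HasExt.{w} C]

/-- The grade of `X` on `Y`: the least degree `i` in which `Ext X Y i` does not vanish, and `⊤` if
there is none. For `X = R ⧸ I` this is the homological description of the `I`-depth of `Y`. -/
noncomputable def extGrade (X Y : C) : ℕ∞ :=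
  ⨅ (i : ℕ) (_ : Nontrivial (Ext X Y i)), (i : ℕ∞)

theorem natCast_le_extGrade_iff {X Y : C} {n : ℕ} :
    (n : ℕ∞) ≤ extGrade X Y ↔ ∀ i < n, Subsingleton (Ext X Y i) := by
  simp only [extGrade, le_iInf₂_iff, Nat.cast_le]
  refine forall_congr' fun i => ?_
  rw [← not_imp_not, not_le, not_nontrivial_iff_subsingleton]

theorem extGrade_le_of_nontrivial {X Y : C} {i : ℕ} (h : Nontrivial (Ext X Y i)) :
    extGrade X Y ≤ i :=
  iInf₂_le i h

theorem subsingleton_ext_of_lt_extGrade {X Y : C} {i : ℕ} (h : (i : ℕ∞) < extGrade X Y) :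
    Subsingleton (Ext X Y i) :=
  not_nontrivial_iff_subsingleton.1 fun hi => h.not_ge (extGrade_le_of_nontrivial hi)

theorem nontrivial_ext_of_extGrade_eq {X Y : C} {n : ℕ} (h : extGrade X Y = n) :
    Nontrivial (Ext X Y n) := by
  by_contra hn
  have hlt : ((n + 1 : ℕ) : ℕ∞) ≤ extGrade X Y := natCast_le_extGrade_iff.2 fun i hi => by
    rcases Nat.lt_succ_iff_lt_or_eq.1 hi with hi | rfl
    · exact subsingleton_ext_of_lt_extGrade (h ▸ Nat.cast_lt.2 hi)
    · exact not_nontrivial_iff_subsingleton.1 hn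
  exact Nat.not_succ_le_self n (Nat.cast_le.1 (h ▸ hlt))

theorem extGrade_le_of_retract (X : C) {Y Z : C} (h : Retract Y Z) :
    extGrade X Z ≤ extGrade X Y := by
  refine le_iInf₂ fun i hi => extGrade_le_of_nontrivial ?_
  have hinj : Function.Injective ((Ext.mk₀ h.i).postcomp X (add_zero i)) :=
    Function.LeftInverse.injective (g := (Ext.mk₀ h.r).postcomp X (add_zero i)) fun e => by
      simp
  exact hinj.nontrivial

theorem extGrade_congr_right (X : C) {Y Z : C} (e : Y ≅ Z) : extGrade X Y = extGrade X Z :=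
  le_antisymm (extGrade_le_of_retract X (Retract.ofIso e.symm))
    (extGrade_le_of_retract X (Retract.ofIso e))

theorem extGrade_biproduct (X : C) {J : Type*} [Finite J] (Y : J → C) [HasBiproduct Y] :
    extGrade X (⨁ Y) = ⨅ j, extGrade X (Y j) := by
  cases nonempty_fintype J
  refine le_antisymm (le_iInf fun j => extGrade_le_of_retract X
    ⟨biproduct.ι Y j, biproduct.π Y j, biproduct.ι_π_self Y j⟩) ?_
  refine ENat.forall_natCast_le_iff_le.1 fun n hn => natCast_le_extGrade_iff.2 fun i hi => ?_
  have (j : J) : Subsingleton (Ext X (Y j) i) :=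
    natCast_le_extGrade_iff.1 (hn.trans (iInf_le _ j)) i hi
  exact (Ext.addEquivBiproduct X (biproduct.isBilimit Y) i).subsingleton

section DepthLemma

variable (X : C) {S : ShortComplex C} (hS : S.ShortExact)
include hS

theorem min_extGrade_le_extGrade_X₃_add_one :
    min (extGrade X S.X₁) (extGrade X S.X₂ + 1) ≤ extGrade X S.X₃ + 1 := by
  cases h : extGrade X S.X₃ with
  | top => exact le_top
  | coe i =>
    obtain ⟨e, he⟩ := (nontrivial_iff_exists_ne 0).1 (nontrivial_ext_of_extGrade_eq h)
    by_cases h₁ : Nontrivial (Ext X S.X₁ (i + 1))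
    · exact min_le_of_left_le (extGrade_le_of_nontrivial h₁)
    rw [not_nontrivial_iff_subsingleton] at h₁
    obtain ⟨x, rfl⟩ := Ext.covariant_sequence_exact₃ X hS e rfl (Subsingleton.elim _ _)
    have hx : x ≠ 0 := fun hx => he (by rw [hx, Ext.zero_comp])
    have h₂ : extGrade X S.X₂ ≤ i := extGrade_le_of_nontrivial (nontrivial_of_ne x 0 hx)
    exact min_le_of_right_le (by gcongr)

theorem extGrade_X₃_add_one_le
    (hf : ∀ i : ℕ, extGrade X S.X₁ = i →
      ∀ e : Ext X S.X₁ i, e.comp (Ext.mk₀ S.f) (add_zero i) = 0) :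
    extGrade X S.X₃ + 1 ≤ extGrade X S.X₁ := by
  cases h : extGrade X S.X₁ with
  | top => exact le_top
  | coe n =>
    obtain ⟨e, he⟩ := (nontrivial_iff_exists_ne 0).1 (nontrivial_ext_of_extGrade_eq h)
    cases n with
    | zero =>
      have := hS.mono_f
      exact absurd (Ext.postcomp_mk₀_injective_of_mono X S.f (by simpa using hf 0 h e)) he
    | succ i =>
      obtain ⟨x, rfl⟩ := Ext.covariant_sequence_exact₁ X hS e (hf _ h e) rfl
      have hx : x ≠ 0 := fun hx => he (by rw [hx, Ext.zero_comp])
      have h₃ : extGrade X S.X₃ ≤ i := extGrade_le_of_nontrivial (nontrivial_of_ne x 0 hx)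
      push_cast
      gcongr

theorem extGrade_X₁_eq_extGrade_X₃_add_one
    (hle : extGrade X S.X₁ ≤ extGrade X S.X₂)
    (hf : ∀ i : ℕ, extGrade X S.X₁ = i →
      ∀ e : Ext X S.X₁ i, e.comp (Ext.mk₀ S.f) (add_zero i) = 0) :
    extGrade X S.X₁ = extGrade X S.X₃ + 1 := by
  refine le_antisymm ?_ (extGrade_X₃_add_one_le X hS hf)
  have hle' : extGrade X S.X₁ ≤ extGrade X S.X₂ + 1 := hle.trans le_self_add
  simpa only [min_eq_left hle'] using min_extGrade_le_extGrade_X₃_add_one X hS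

end DepthLemma

end Grade

section Rees

variable {R : Type u} [CommRing R] [IsNoetherianRing R]

theorem rdepth_eq_extGrade (I : Ideal R) (M : Type u) [AddCommGroup M] [Module R M]
    [Module.Finite R M] (hM : I • (⊤ : Submodule R M) < ⊤) :
    rdepth I M = extGrade (ModuleCat.of R (R ⧸ I)) (ModuleCat.of R M) := by
  have hsupp : Module.support R (R ⧸ I) = PrimeSpectrum.zeroLocus I := by
    rw [Module.support_eq_zeroLocus, Ideal.annihilator_quotient]
  refine le_antisymm (sSup_le ?_) (ENat.forall_natCast_le_iff_le.1 fun n hn => ?_)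
  · rintro _ ⟨rs, rfl, hmem, hreg⟩
    have htop : Ideal.ofList rs • (⊤ : Submodule R M) ≤ I • ⊤ :=
      Submodule.smul_mono_left (Ideal.span_le.2 hmem)
    exact natCast_le_extGrade_iff.2 <| ModuleCat.subsingleton_ext_of_exists_isRegular I
      (ModuleCat.of R (R ⧸ I)) hsupp.subset (ModuleCat.of R M) hM rs hmem
      ⟨hreg, (htop.trans_lt hM).ne'⟩
  · obtain ⟨rs, rfl, hmem, hreg⟩ := ModuleCat.exists_isRegular_of_exists_subsingleton_ext I n
      (ModuleCat.of R M) hM (ModuleCat.of R (R ⧸ I)) hsupp (natCast_le_extGrade_iff.1 hn)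
    exact le_sSup ⟨rs, rfl, hmem, hreg.toIsWeaklyRegular⟩

theorem rdepth_maximalIdeal_eq_extGrade [IsLocalRing R] (M : Type u) [AddCommGroup M]
    [Module R M] [Module.Finite R M] [Nontrivial M] :
    rdepth (maximalIdeal R) M =
      extGrade (ModuleCat.of R (R ⧸ maximalIdeal R)) (ModuleCat.of R M) :=
  rdepth_eq_extGrade _ M (Submodule.top_ne_ideal_smul_of_le_jacobson_annihilator
    (maximalIdeal_le_jacobson _)).symm.lt_top

end Rees

section SmulVanishing

theorem comp_mk₀_eq_zero_of_mem_smul_top {R : Type*} [CommRing R] {C : Type u} [Category.{v} C]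
    [Abelian C] [HasExt.{w} C] [Linear R C] {I : Ideal R} {X Y Z : C}
    (hX : ∀ r ∈ I, r • 𝟙 X = 0) {g : Y ⟶ Z} (hg : g ∈ I • (⊤ : Submodule R (Y ⟶ Z))) {i : ℕ}
    (e : Ext X Y i) : e.comp (Ext.mk₀ g) (add_zero i) = 0 := by
  induction hg using Submodule.smul_induction_on' with
  | smul r hr g _ =>
    have hr0 : r • e.comp (Ext.mk₀ g) (add_zero i) =
        (Ext.mk₀ (r • 𝟙 X)).comp (e.comp (Ext.mk₀ g) (add_zero i)) (zero_add i) := by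
      rw [Ext.mk₀_smul, Ext.smul_comp, Ext.mk₀_id_comp]
    rw [Ext.mk₀_smul, Ext.comp_smul, hr0, hX r hr, Ext.mk₀_zero, Ext.zero_comp]
  | add g _ h _ hg hh => rw [Ext.mk₀_add, Ext.comp_add, hg, hh, add_zero]

theorem linearMap_mem_smul_top {R : Type*} [CommRing R] {K F : Type*} [AddCommGroup K]
    [Module R K] [AddCommGroup F] [Module R F] [Module.Free R K] [Module.Finite R K] {I : Ideal R}
    {φ : K →ₗ[R] F} (hφ : LinearMap.range φ ≤ I • ⊤) :
    φ ∈ I • (⊤ : Submodule R (K →ₗ[R] F)) := by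
  let b := Module.Free.chooseBasis R K
  have hsum : φ = ∑ j, LinearMap.smulRightₗ (b.coord j) (φ (b j)) :=
    b.ext fun i => by simp [LinearMap.sum_apply, Finsupp.single_apply]
  rw [hsum]
  refine Submodule.sum_mem _ fun j _ => ?_
  have hj := Submodule.mem_map_of_mem (f := LinearMap.smulRightₗ (M := F) (b.coord j))
    (hφ ⟨b j, rfl⟩)
  rw [Submodule.map_smul''] at hj
  exact Submodule.smul_mono le_rfl le_top hj

variable {R : Type u} [CommRing R]

theorem comp_mk₀_rTensor_eq_zero {I : Ideal R} {K F N : Type u} [AddCommGroup K] [Module R K]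
    [AddCommGroup F] [Module R F] [AddCommGroup N] [Module R N] [Module.Free R K]
    [Module.Finite R K] {φ : K →ₗ[R] F} (hφ : LinearMap.range φ ≤ I • ⊤) {i : ℕ}
    (e : Ext (ModuleCat.of R (R ⧸ I)) (ModuleCat.of R (K ⊗[R] N)) i) :
    e.comp (Ext.mk₀ (ModuleCat.ofHom (φ.rTensor N))) (add_zero i) = 0 := by
  have hI (r : R) (hr : r ∈ I) : r • 𝟙 (ModuleCat.of R (R ⧸ I)) = 0 :=
    ModuleCat.hom_ext (LinearMap.ext (Module.mem_annihilator.1 (Ideal.annihilator_quotient.ge hr)))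
  refine comp_mk₀_eq_zero_of_mem_smul_top hI ?_ e
  let T : (K →ₗ[R] F) →ₗ[R] (ModuleCat.of R (K ⊗[R] N) ⟶ ModuleCat.of R (F ⊗[R] N)) :=
    ModuleCat.homLinearEquiv.symm.toLinearMap ∘ₗ LinearMap.rTensorHom N
  have hT := Submodule.mem_map_of_mem (f := T) (linearMap_mem_smul_top hφ)
  rw [Submodule.map_smul''] at hT
  exact Submodule.smul_mono le_rfl le_top hT

end SmulVanishing

section FreeTensor

variable {R : Type u} [CommRing R]

theorem extGrade_tensorProduct_of_free (X : ModuleCat.{u} R) (F N : Type u) [AddCommGroup F]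
    [Module R F] [Module.Free R F] [Module.Finite R F] [Nontrivial F] [AddCommGroup N]
    [Module R N] :
    extGrade X (ModuleCat.of R (F ⊗[R] N)) = extGrade X (ModuleCat.of R N) := by
  have : Nontrivial R := Module.nontrivial R F
  let b := Module.finBasis R F
  have : Nonempty (Fin (Module.finrank R F)) := b.index_nonempty
  let e : F ⊗[R] N ≃ₗ[R] (Fin (Module.finrank R F) → N) :=
    TensorProduct.equivFinsuppOfBasisLeft b ≪≫ₗ Finsupp.linearEquivFunOnFinite R N _
  let e' := ModuleCat.biproductIsoPi fun _ : Fin (Module.finrank R F) => ModuleCat.of R N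
  rw [extGrade_congr_right X (e.toModuleIso ≪≫ e'.symm), extGrade_biproduct, ciInf_const]

end FreeTensor

theorem nontrivial_residueField_tensorProduct {R : Type*} [CommRing R] [IsLocalRing R]
    (M : Type*) [AddCommGroup M] [Module R M] [Module.Finite R M] [Nontrivial M] :
    Nontrivial (ResidueField R ⊗[R] M) := by
  rwa [← not_subsingleton_iff_nontrivial, IsLocalRing.subsingleton_tensorProduct,
    not_subsingleton_iff_nontrivial]

theorem nontrivial_tensorProduct {R : Type*} [CommRing R] [IsLocalRing R] (M N : Type*)
    [AddCommGroup M] [Module R M] [Module.Finite R M] [Nontrivial M] [AddCommGroup N]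
    [Module R N] [Module.Finite R N] [Nontrivial N] : Nontrivial (M ⊗[R] N) := by
  have hM := nontrivial_residueField_tensorProduct (R := R) M
  have hN := nontrivial_residueField_tensorProduct (R := R) N
  have hMN : Nontrivial (ResidueField R ⊗[R] (M ⊗[R] N)) :=
    (TensorProduct.AlgebraTensorModule.distribBaseChange R (ResidueField R) M N).toEquiv.nontrivial
  contrapose! hMN
  infer_instance

section TorIndependence

section Chase

variable {R K F M A B C D : Type*} [CommRing R] [AddCommGroup K] [Module R K] [AddCommGroup F]
  [Module R F] [AddCommGroup M] [Module R M] [AddCommGroup A] [Module R A] [AddCommGroup B]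
  [Module R B] [AddCommGroup C] [Module R C] [AddCommGroup D] [Module R D]

theorem lTensor_rTensor_comm (f : K →ₗ[R] F) (g : A →ₗ[R] B) (x : K ⊗[R] A) :
    g.lTensor F (f.rTensor A x) = f.rTensor B (g.lTensor K x) := by
  rw [← LinearMap.comp_apply, ← LinearMap.comp_apply, LinearMap.lTensor_comp_rTensor,
    LinearMap.rTensor_comp_lTensor]

-- `Tor` is derived in its second argument, so there is no long exact sequence in the first one to
-- quote: this chase through the rows `K ⊗ P → F ⊗ P → M ⊗ P` of a resolution `P` replaces it.
theorem exact_lTensor_map_of_exact {ι : K →ₗ[R] F} {f : F →ₗ[R] M} (hιf : Function.Exact ι f)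
    (hf : Function.Surjective f) {a : A →ₗ[R] B} {b : B →ₗ[R] C} {c : C →ₗ[R] D}
    (hba : b ∘ₗ a = 0) (hM : Function.Exact (a.lTensor M) (b.lTensor M))
    (hF : Function.Exact (b.lTensor F) (c.lTensor F)) (hC : Function.Injective (ι.rTensor C)) :
    Function.Exact (b.lTensor K) (TensorProduct.map ι c) := by
  have hmap (z : K ⊗[R] C) : TensorProduct.map ι c z = c.lTensor F (ι.rTensor C z) := by
    rw [← LinearMap.comp_apply, LinearMap.lTensor_comp_rTensor]
  intro z
  rw [hmap]
  constructor
  · intro hz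
    obtain ⟨w, hw⟩ := (hF _).1 hz
    have hfw : b.lTensor M (f.rTensor B w) = 0 := by
      rw [lTensor_rTensor_comm, hw, (rTensor_exact C hιf hf).apply_apply_eq_zero]
    obtain ⟨v', hv'⟩ := (hM _).1 hfw
    obtain ⟨v, rfl⟩ := LinearMap.rTensor_surjective A hf v'
    have hwv : f.rTensor B (w - a.lTensor F v) = 0 := by
      rw [map_sub, ← lTensor_rTensor_comm, hv', sub_self]
    obtain ⟨u, hu⟩ := (rTensor_exact B hιf hf _).1 hwv
    refine ⟨u, hC ?_⟩
    rw [← lTensor_rTensor_comm, hu, map_sub, hw, ← LinearMap.lTensor_comp_apply, hba,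
      LinearMap.lTensor_zero, LinearMap.zero_apply, sub_zero]
  · rintro ⟨u, rfl⟩
    rw [← lTensor_rTensor_comm, hF.apply_apply_eq_zero]

end Chase

variable {R : Type u} [CommRing R]

variable (R) in
/-- Tor-independence of `M` and `N`: all the higher `Tor` modules of the pair vanish. -/
def TorIndependent (M N : Type u) [AddCommGroup M] [Module R M] [AddCommGroup N]
    [Module R N] : Prop :=
  ∀ i : ℕ, 1 ≤ i →
    IsZero (((Tor (ModuleCat R) i).obj (ModuleCat.of R M)).obj (ModuleCat.of R N))

variable {M N : Type u} [AddCommGroup M] [Module R M] [AddCommGroup N] [Module R N]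

theorem torIndependent_of_projective_right [Module.Projective R N] : TorIndependent R M N := by
  intro i hi
  obtain ⟨j, rfl⟩ := Nat.exists_eq_add_of_le' hi
  have : Projective (ModuleCat.of R N) := (IsProjective.iff_projective N).1 inferInstance
  exact isZero_Tor_succ_of_projective (ModuleCat R) _ _ j

theorem torIndependent_iff_exact_lTensor (P : ProjectiveResolution (ModuleCat.of R N)) :
    TorIndependent R M N ↔ ∀ i, Function.Exact
      ((P.complex.d (i + 2) (i + 1)).hom.lTensor M) ((P.complex.d (i + 1) i).hom.lTensor M) := by
  let T := (MonoidalCategory.tensoringLeft (ModuleCat.{u} R)).obj (ModuleCat.of R M)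
  have key (i : ℕ) :
      IsZero (((Tor (ModuleCat R) (i + 1)).obj (ModuleCat.of R M)).obj (ModuleCat.of R N)) ↔
        Function.Exact ((P.complex.d (i + 2) (i + 1)).hom.lTensor M)
          ((P.complex.d (i + 1) i).hom.lTensor M) := by
    refine (P.isoLeftDerivedObj T (i + 1)).isZero_iff.trans ?_
    refine (HomologicalComplex.exactAt_iff_isZero_homology _ _).symm.trans ?_
    rw [HomologicalComplex.exactAt_iff' _ (i + 2) (i + 1) i
      (by simp only [ChainComplex.prev]; rfl) (by simp)]
    exact ShortComplex.ShortExact.moduleCat_exact_iff_function_exact _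
  refine ⟨fun h i => (key i).1 (h (i + 1) (by omega)), fun h i hi => ?_⟩
  obtain ⟨j, rfl⟩ := Nat.exists_eq_add_of_le' hi
  exact (key j).2 (h j)

theorem flat_projectiveResolution_X {L : ModuleCat.{u} R} (P : ProjectiveResolution L) (i : ℕ) :
    Module.Flat R (P.complex.X i) :=
  have : Module.Projective R (P.complex.X i) :=
    (IsProjective.iff_projective _).2 (P.projective i)
  inferInstance

section Kernel

variable {F : Type u} [AddCommGroup F] [Module R F] {f : F →ₗ[R] M}

theorem TorIndependent.ker [Module.Flat R F] (h : TorIndependent R M N)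
    (hf : Function.Surjective f) : TorIndependent R (LinearMap.ker f) N := by
  let P := projectiveResolution (ModuleCat.of R N)
  have hP (i : ℕ) := flat_projectiveResolution_X P i
  have hι (i : ℕ) : Function.Injective ((LinearMap.ker f).subtype.rTensor (P.complex.X i)) :=
    Module.Flat.rTensor_preserves_injective_linearMap _ (LinearMap.ker f).injective_subtype
  have hd (i : ℕ) : Function.Exact (P.complex.d (i + 2) (i + 1)).hom (P.complex.d (i + 1) i).hom :=
    (ShortComplex.ShortExact.moduleCat_exact_iff_function_exact _).1 (P.exact_succ i)
  rw [torIndependent_iff_exact_lTensor P] at h ⊢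
  intro i
  have hexact := exact_lTensor_map_of_exact f.exact_subtype_ker_map hf
    (hd (i + 1)).linearMap_comp_eq_zero (h (i + 1)) (Module.Flat.lTensor_exact F (hd i))
    (hι (i + 1))
  rw [← LinearMap.rTensor_comp_lTensor, LinearMap.coe_comp] at hexact
  exact (hι i).comp_exact_iff_exact.1 hexact

theorem TorIndependent.rTensor_ker_subtype_injective (h : TorIndependent R M N)
    (hf : Function.Surjective f) :
    Function.Injective ((LinearMap.ker f).subtype.rTensor N) := by
  let P := projectiveResolution (ModuleCat.of R N)
  have hP (i : ℕ) := flat_projectiveResolution_X P i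
  have hd : Function.Exact (P.complex.d 2 1).hom (P.complex.d 1 0).hom :=
    (ShortComplex.ShortExact.moduleCat_exact_iff_function_exact _).1 (P.exact_succ 0)
  let π : P.complex.X 0 →ₗ[R] N := (P.π.f 0).hom
  have hπd : Function.Exact (P.complex.d 1 0).hom π :=
    (ShortComplex.ShortExact.moduleCat_exact_iff_function_exact _).1 P.exact₀
  have hπ : Function.Surjective π :=
    (ModuleCat.epi_iff_surjective (P.π.f 0)).1 inferInstance
  have hexact := exact_lTensor_map_of_exact f.exact_subtype_ker_map hf
    hd.linearMap_comp_eq_zero ((torIndependent_iff_exact_lTensor P).1 h 0)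
    (lTensor_exact F hπd hπ) (Module.Flat.rTensor_preserves_injective_linearMap _
      (LinearMap.ker f).injective_subtype)
  rw [injective_iff_map_eq_zero]
  intro z hz
  obtain ⟨z, rfl⟩ := LinearMap.lTensor_surjective (LinearMap.ker f) hπ z
  rw [← LinearMap.comp_apply, LinearMap.rTensor_comp_lTensor] at hz
  obtain ⟨u, rfl⟩ := (hexact z).1 hz
  exact (lTensor_exact _ hπd hπ).apply_apply_eq_zero u

end Kernel

end TorIndependence

section ProjectiveDimension

theorem projectiveDimension_X₁_eq_of_projective {C : Type u} [Category.{v} C] [Abelian C]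
    {S : ShortComplex C} (hS : S.ShortExact) [Projective S.X₂] {p : ℕ}
    (h : projectiveDimension S.X₃ = (p + 1 : ℕ)) : projectiveDimension S.X₁ = p := by
  refine le_antisymm ?_ ?_
  · rw [projectiveDimension_le_iff]
    exact (hS.hasProjectiveDimensionLT_X₃_iff p inferInstance).1
      ((projectiveDimension_le_iff _ _).1 h.le)
  · rw [projectiveDimension_ge_iff]
    refine fun hlt => (projectiveDimension_ge_iff _ _).1 h.ge ?_
    exact hS.hasProjectiveDimensionLT_X₃ p hlt inferInstance

theorem HasFiniteProjDim.exists_projectiveDimension_eq {R : Type u} [Ring R] {M : Type u}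
    [AddCommGroup M] [Module R M] [Nontrivial M] (h : HasFiniteProjDim R M) :
    ∃ p : ℕ, projectiveDimension (ModuleCat.of R M) = p := by
  obtain ⟨n, P, hP⟩ := h
  have htop : projectiveDimension (ModuleCat.of R M) ≠ ⊤ := by
    refine (projectiveDimension_ne_top_iff _).2 ⟨n, HasProjectiveDimensionLT.mk fun i hi Y e => ?_⟩
    obtain ⟨f, hf, rfl⟩ := P.extMk_surjective e (i + 1) rfl
    obtain rfl : f = 0 := (hP i (by omega)).eq_of_src _ _
    exact P.extMk_zero _ _
  have hbot : projectiveDimension (ModuleCat.of R M) ≠ ⊥ := by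
    rw [Ne, projectiveDimension_eq_bot_iff, ModuleCat.isZero_iff_subsingleton]
    exact not_subsingleton M
  obtain ⟨d, hd⟩ := WithBot.ne_bot_iff_exists.1 hbot
  have hdtop : d ≠ ⊤ := by
    rintro rfl
    exact htop hd.symm
  obtain ⟨p, rfl⟩ := ENat.ne_top_iff_exists.1 hdtop
  exact ⟨p, hd.symm⟩

theorem nontrivial_of_projectiveDimension_eq {R : Type u} [Ring R] {M : Type u}
    [AddCommGroup M] [Module R M] {p : ℕ}
    (h : projectiveDimension (ModuleCat.of R M) = p) : Nontrivial M := by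
  by_contra hM
  rw [not_nontrivial_iff_subsingleton, ← ModuleCat.isZero_of_iff_subsingleton (R := R),
    ← projectiveDimension_eq_bot_iff, h] at hM
  exact WithBot.coe_ne_bot hM

theorem free_of_projectiveDimension_eq_zero {R : Type u} [CommRing R] [IsLocalRing R]
    {M : Type u} [AddCommGroup M] [Module R M] [Module.Finite R M]
    (h : projectiveDimension (ModuleCat.of R M) = 0) : Module.Free R M :=
  have : Module.Projective R M :=
    (IsProjective.iff_projective M).2 ((projectiveDimension_eq_zero_iff _).1 h).1
  Module.free_of_flat_of_isLocalRing

end ProjectiveDimension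

section MinimalCover

theorem mem_smul_top_of_forall_mem {R ι : Type*} [CommRing R] [Finite ι] {I : Ideal R} {c : ι → R}
    (hc : ∀ i, c i ∈ I) : c ∈ I • (⊤ : Submodule R (ι → R)) := by
  cases nonempty_fintype ι
  rw [← (Pi.basisFun R ι).sum_repr c]
  exact Submodule.sum_mem _ fun i _ => Submodule.smul_mem_smul (hc i) trivial

variable {R : Type*} [CommRing R] [IsLocalRing R]

theorem ker_linearCombination_le_smul_top {ι M : Type*} [Fintype ι] [AddCommGroup M] [Module R M]
    {v : ι → M} (hv : LinearIndependent (ResidueField R)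
      fun i => (1 : ResidueField R) ⊗ₜ[R] v i) :
    LinearMap.ker (Fintype.linearCombination R v) ≤ maximalIdeal R • ⊤ := by
  refine fun c hc => mem_smul_top_of_forall_mem fun i => ?_
  have hsum : ∑ i, residue R (c i) • ((1 : ResidueField R) ⊗ₜ[R] v i) = 0 := by
    have h := congrArg (TensorProduct.mk R (ResidueField R) M 1) (LinearMap.mem_ker.1 hc)
    rw [Fintype.linearCombination_apply, map_sum, map_zero] at h
    rw [← h]
    refine Finset.sum_congr rfl fun i _ => ?_
    rw [map_smul, ← ResidueField.algebraMap_eq, algebraMap_smul, TensorProduct.mk_apply]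
  exact (residue_eq_zero_iff _).1 (Fintype.linearIndependent_iff.1 hv _ hsum i)

theorem exists_surjective_ker_le_smul_top (M : Type*) [AddCommGroup M] [Module R M]
    [Module.Finite R M] :
    ∃ (n : ℕ) (f : (Fin n → R) →ₗ[R] M),
      Function.Surjective f ∧ LinearMap.ker f ≤ maximalIdeal R • ⊤ := by
  let w := Module.finBasis (ResidueField R) (ResidueField R ⊗[R] M)
  obtain ⟨v, hv⟩ : ∃ v : _ → M, (fun i => (1 : ResidueField R) ⊗ₜ[R] v i) = w :=
    (TensorProduct.mk_surjective R M (ResidueField R) Ideal.Quotient.mk_surjective).comp_left w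
  refine ⟨_, Fintype.linearCombination R v, ?_, ker_linearCombination_le_smul_top ?_⟩
  · rw [← LinearMap.range_eq_top, Fintype.range_linearCombination]
    exact IsLocalRing.span_eq_top_of_tmul_eq_basis v w (congr_fun hv)
  · exact hv ▸ w.linearIndependent

end MinimalCover

section DepthFormula

theorem TorIndependent.extGrade_ker_tensorProduct {R F M N : Type u} [CommRing R]
    [AddCommGroup F] [Module R F] [AddCommGroup M] [Module R M] [AddCommGroup N] [Module R N]
    (h : TorIndependent R M N) {f : F →ₗ[R] M} (hf : Function.Surjective f) (X : ModuleCat.{u} R)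
    (hle : extGrade X (ModuleCat.of R (LinearMap.ker f ⊗[R] N)) ≤
      extGrade X (ModuleCat.of R (F ⊗[R] N)))
    (hzero : ∀ i : ℕ, extGrade X (ModuleCat.of R (LinearMap.ker f ⊗[R] N)) = i →
      ∀ e : Ext X (ModuleCat.of R (LinearMap.ker f ⊗[R] N)) i,
        e.comp (Ext.mk₀ (ModuleCat.ofHom ((LinearMap.ker f).subtype.rTensor N)))
          (add_zero i) = 0) :
    extGrade X (ModuleCat.of R (LinearMap.ker f ⊗[R] N)) =
      extGrade X (ModuleCat.of R (M ⊗[R] N)) + 1 := by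
  have hex := rTensor_exact N f.exact_subtype_ker_map hf
  have hS := ModuleCat.shortComplex_shortExact
    (ModuleCat.shortComplexOfCompEqZero _ _ hex.linearMap_comp_eq_zero) hex
    (h.rTensor_ker_subtype_injective hf) (LinearMap.rTensor_surjective N hf)
  exact (extGrade_X₁_eq_extGrade_X₃_add_one X hS hle hzero :)

variable {R : Type u} [CommRing R] [IsNoetherianRing R] [IsLocalRing R]

theorem TorIndependent.extGrade_eq_extGrade_tensorProduct_add {M N : Type u} [AddCommGroup M]
    [Module R M] [Module.Finite R M] [AddCommGroup N] [Module R N] (h : TorIndependent R M N)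
    {p : ℕ} (hp : projectiveDimension (ModuleCat.of R M) = p) :
    extGrade (ModuleCat.of R (R ⧸ maximalIdeal R)) (ModuleCat.of R N) =
      extGrade (ModuleCat.of R (R ⧸ maximalIdeal R)) (ModuleCat.of R (M ⊗[R] N)) + p := by
  induction p generalizing M with
  | zero =>
    have := nontrivial_of_projectiveDimension_eq hp
    have := free_of_projectiveDimension_eq_zero hp
    rw [extGrade_tensorProduct_of_free, Nat.cast_zero, add_zero]
  | succ p ih =>
    have := nontrivial_of_projectiveDimension_eq hp
    obtain ⟨n, f, hf, hker⟩ := exists_surjective_ker_le_smul_top (R := R) M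
    have : Projective (ModuleCat.of R (Fin n → R)) := ModuleCat.projective_of_free (Pi.basisFun R _)
    have hpK : projectiveDimension (ModuleCat.of R (LinearMap.ker f)) = p :=
      projectiveDimension_X₁_eq_of_projective (LinearMap.shortExact_shortComplexKer hf) hp
    have : Nontrivial (Fin n → R) := hf.nontrivial
    have hF := extGrade_tensorProduct_of_free (ModuleCat.of R (R ⧸ maximalIdeal R)) (Fin n → R) N
    have hK := ih (h.ker hf) hpK
    have hle : extGrade (ModuleCat.of R (R ⧸ maximalIdeal R))
          (ModuleCat.of R (LinearMap.ker f ⊗[R] N)) ≤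
        extGrade (ModuleCat.of R (R ⧸ maximalIdeal R)) (ModuleCat.of R ((Fin n → R) ⊗[R] N)) := by
      rw [hF, hK]
      exact le_self_add
    have hstep := h.extGrade_ker_tensorProduct hf _ hle fun i hi e => by
      cases p with
      | zero =>
        have := free_of_projectiveDimension_eq_zero hpK
        exact comp_mk₀_rTensor_eq_zero (by rwa [Submodule.range_subtype]) e
      | succ q =>
        have hlt : (i : ℕ∞) < extGrade (ModuleCat.of R (R ⧸ maximalIdeal R))
            (ModuleCat.of R ((Fin n → R) ⊗[R] N)) := by
          rw [hF, hK, hi]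
          exact_mod_cast Nat.lt_add_of_pos_right q.succ_pos
        have := subsingleton_ext_of_lt_extGrade hlt
        exact Subsingleton.elim _ _
    rw [hK, hstep, Nat.cast_succ, add_assoc, add_comm 1]

theorem rdepth_eq_rdepth_tensorProduct_add {M N : Type u} [AddCommGroup M] [Module R M]
    [Module.Finite R M] [AddCommGroup N] [Module R N] [Module.Finite R N] [Nontrivial N] {p : ℕ}
    (hp : projectiveDimension (ModuleCat.of R M) = p) (h : TorIndependent R M N) :
    rdepth (maximalIdeal R) N = rdepth (maximalIdeal R) (M ⊗[R] N) + p := by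
  have := nontrivial_of_projectiveDimension_eq hp
  have := nontrivial_tensorProduct (R := R) M N
  rw [rdepth_maximalIdeal_eq_extGrade, rdepth_maximalIdeal_eq_extGrade,
    h.extGrade_eq_extGrade_tensorProduct_add hp]

theorem rdepth_self_eq_rdepth_add {M : Type u} [AddCommGroup M] [Module R M]
    [Module.Finite R M] {p : ℕ} (hp : projectiveDimension (ModuleCat.of R M) = p) :
    rdepth (maximalIdeal R) R = rdepth (maximalIdeal R) M + p := by
  have := nontrivial_of_projectiveDimension_eq hp
  rw [rdepth_maximalIdeal_eq_extGrade, rdepth_maximalIdeal_eq_extGrade,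
    torIndependent_of_projective_right.extGrade_eq_extGrade_tensorProduct_add (N := R) hp,
    extGrade_congr_right _ (TensorProduct.rid R M).toModuleIso]

end DepthFormula

/-- The depth formula: if `Tor_i(M,N) = 0` for all `i ≥ 1` and `pd_R M < ∞`, then
`depth M + depth N = depth R + depth (M ⊗ N)`. -/
theorem stmt10 {R : Type u} [CommRing R] [IsNoetherianRing R] [IsLocalRing R]
    (M N : Type u) [AddCommGroup M] [Module R M] [Module.Finite R M] [Nontrivial M]
    [AddCommGroup N] [Module R N] [Module.Finite R N] [Nontrivial N]
    (htor : ∀ i : ℕ, 1 ≤ i →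
      IsZero (((Tor (ModuleCat R) i).obj (ModuleCat.of R M)).obj (ModuleCat.of R N)))
    (hpd : HasFiniteProjDim R M) :
    rdepth (maximalIdeal R) M + rdepth (maximalIdeal R) N =
      rdepth (maximalIdeal R) R + rdepth (maximalIdeal R) (M ⊗[R] N) := by
  obtain ⟨p, hp⟩ := hpd.exists_projectiveDimension_eq
  rw [rdepth_eq_rdepth_tensorProduct_add hp htor, rdepth_self_eq_rdepth_add hp]
  ring
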